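/- Let M : ℝ² → ℝ be a smooth, nowhere-vanishing function of (y,T) satisfying the RKdV equation M_T + (M³(M_yy − 1))_y = 0, let λ ∈ ℝ, and let Φ : ℝ² → ℝ be a smooth function satisfying Φ_yy = −(M_y/M)Φ_y + ((M − λ)/M²)Φ at every point of ℝ². Then the function W := Φ_T − (M²·M_yy + M·M_y² − M² + 4λM)Φ_y + M·M_y·Φ also satisfies W_yy = −(M_y/M)W_y + ((M − λ)/M²)W at every point of ℝ². -/

import Mathlib

noncomputable section

/-- Partial derivative of `f` with respect to its first argument. -/
def d1 (f : ℝ → ℝ → ℝ) : ℝ → ℝ → ℝ := fun a b => deriv (fun a' => f a' b) a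

/-- Partial derivative of `f` with respect to its second argument. -/
def d2 (f : ℝ → ℝ → ℝ) : ℝ → ℝ → ℝ := fun a b => deriv (fun b' => f a b') b

/-- Smoothness of a two-variable real function. -/
def Smooth2 (f : ℝ → ℝ → ℝ) : Prop := ContDiff ℝ (⊤ : ℕ∞) (fun p : ℝ × ℝ => f p.1 p.2)

/-!
In the reciprocal derivation `D = M ∂_y` the spectral equation is the Schrödinger equation
`D²Φ = (M - λ)Φ`, and the Lax pair asks for `Φ_T = a DΦ - (DM)Φ` with
`a = (M M_y)_y - M + 4λ`. The RKdV equation reads `M_T = c M` for `c = D(2M - a)`, which also says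
that `[∂_T, D] = c D`. Applying `D²` to the temporal equation and commuting `∂_T` past `D` twice,
the conditions for compatibility become identities that follow from `c + Da = 2DM`. Only the
Leibniz rule and the commutation of the partial derivatives enter, so the computation takes place
in a commutative ring with two commuting derivations.
-/

section DifferentialAlgebra

variable {k R : Type*} [CommRing k] [CommRing R] [Algebra k R]

theorem lie_smul_eq_smul_smul {δ τ : Derivation k R R} {c m : R} (hδτ : ⁅τ, δ⁆ = 0)
    (hm : τ m = c * m) : ⁅τ, m • δ⁆ = c • m • δ := by
  rw [LieRinehartRing.leibniz_smul_right, hδτ, smul_zero, zero_add, Derivation.bracket_eq_fun, hm,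
    mul_smul]

/-- Modulo `D²Φ = uΦ`, the function `(D² - u)(τΦ - a DΦ - bΦ)` is a combination of `DΦ` and `Φ`;
`hDΦcoeff` and `hΦcoeff` say that its two coefficients vanish. -/
theorem schrodinger_of_zeroCurvature {D τ : Derivation k R R} {a b c u Φ : R}
    (hbracket : ⁅τ, D⁆ = c • D)
    (hDΦcoeff : D (c + D a + 2 * b) = 0)
    (hΦcoeff : τ u = 2 * c * u + 2 * u * D a + a * D u + D (D b))
    (hΦ : D (D Φ) = u * Φ) :
    D (D (τ Φ - a * D Φ - b * Φ)) = u * (τ Φ - a * D Φ - b * Φ) := by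
  have hcomm (f : R) : D (τ f) = τ (D f) - c * D f := by
    have h : τ (D f) - D (τ f) = c * D f := congrArg (fun δ : Derivation k R R ↦ δ f) hbracket
    linear_combination -h
  have hτ : D (D (τ Φ)) = u * τ Φ + (τ u - 2 * c * u) * Φ - D c * D Φ := by
    rw [hcomm, map_sub, hcomm, hΦ]
    simp only [Derivation.leibniz, smul_eq_mul, hΦ]
    ring
  have ha : D (D (a * D Φ)) = u * (a * D Φ) + D (D a) * D Φ + (2 * u * D a + a * D u) * Φ := by
    simp only [Derivation.leibniz, smul_eq_mul, map_add, hΦ]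
    ring
  have hb : D (D (b * Φ)) = u * (b * Φ) + 2 * D b * D Φ + D (D b) * Φ := by
    simp only [Derivation.leibniz, smul_eq_mul, map_add, hΦ]
    ring
  rw [two_mul, map_add, map_add, map_add] at hDΦcoeff
  rw [map_sub, map_sub, map_sub, map_sub, hτ, ha, hb]
  linear_combination Φ * hΦcoeff - D Φ * hDΦcoeff

/-- The coefficient `a` of the temporal equation `Φ_T = a DΦ - (DM)Φ` of the RKdV Lax pair, where
`D = M ∂_y` and `δ` plays the role of `∂_y`. -/
def rkdvTransport (δ : Derivation k R R) (lam : k) (M : R) : R :=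
  δ (M * δ M) - M + algebraMap k R (4 * lam)

/-- The defect of the temporal equation of the RKdV Lax pair, with the derivations `δ` and `τ` in
the roles of `∂_y` and `∂_T`. -/
def rkdvTemporalDefect (δ τ : Derivation k R R) (lam : k) (M Φ : R) : R :=
  τ Φ - (M ^ 2 * δ (δ M) + M * δ M ^ 2 - M ^ 2 + algebraMap k R (4 * lam) * M) * δ Φ + M * δ M * Φ

theorem rkdvTemporalDefect_eq (δ τ : Derivation k R R) (lam : k) (M Φ : R) :
    rkdvTemporalDefect δ τ lam M Φ =
      τ Φ - rkdvTransport δ lam M * (M • δ) Φ - -(M • δ) M * Φ := by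
  simp only [rkdvTemporalDefect, rkdvTransport, Derivation.smul_apply, Derivation.leibniz,
    smul_eq_mul]
  ring

theorem rkdv_flux_deriv_eq (δ : Derivation k R R) (lam : k) (M : R) :
    δ (M ^ 3 * (δ (δ M) - 1)) = -((2 * (M • δ) M - (M • δ) (rkdvTransport δ lam M)) * M) := by
  have hflux : δ (M ^ 3 * (δ (δ M) - 1)) =
      3 * M ^ 2 * δ M * (δ (δ M) - 1) + M ^ 3 * δ (δ (δ M)) := by
    simp only [Derivation.leibniz, Derivation.leibniz_pow, map_sub, smul_eq_mul,
      Derivation.map_one_eq_zero, nsmul_eq_mul, Nat.cast_ofNat]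
    ring
  have htransport : δ (rkdvTransport δ lam M) = 3 * δ M * δ (δ M) + M * δ (δ (δ M)) - δ M := by
    rw [rkdvTransport, map_add, δ.map_algebraMap]
    simp only [map_sub, map_add, Derivation.leibniz, smul_eq_mul]
    ring
  rw [Derivation.smul_apply, Derivation.smul_apply, smul_eq_mul, smul_eq_mul, hflux, htransport]
  ring

theorem smul_apply_mul_rkdvTransport (δ : Derivation k R R) (lam : k) (M : R) :
    (M • δ) (M * rkdvTransport δ lam M) =
      (M • δ) ((M • δ) ((M • δ) M)) - 2 * M * (M • δ) M
        + algebraMap k R (4 * lam) * (M • δ) M := by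
  set D := M • δ with hD
  have hMa : M * rkdvTransport δ lam M = D (D M) - M ^ 2 + algebraMap k R (4 * lam) * M := by
    rw [rkdvTransport, hD]
    simp only [Derivation.smul_apply, smul_eq_mul]
    ring
  rw [hMa, map_add, map_sub, D.leibniz, D.leibniz_pow, D.map_algebraMap]
  simp only [smul_eq_mul, nsmul_eq_mul, Nat.cast_ofNat]
  ring

theorem schrodinger_rkdvTemporalDefect {δ τ : Derivation k R R} {lam : k} {M Φ : R}
    (hδτ : ⁅τ, δ⁆ = 0)
    (hRKdV : τ M + δ (M ^ 3 * (δ (δ M) - 1)) = 0)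
    (hΦ : (M • δ) ((M • δ) Φ) = (M - algebraMap k R lam) * Φ) :
    (M • δ) ((M • δ) (rkdvTemporalDefect δ τ lam M Φ)) =
      (M - algebraMap k R lam) * rkdvTemporalDefect δ τ lam M Φ := by
  have hflow : τ M = (2 * (M • δ) M - (M • δ) (rkdvTransport δ lam M)) * M := by
    linear_combination hRKdV - rkdv_flux_deriv_eq δ lam M
  rw [rkdvTemporalDefect_eq]
  refine schrodinger_of_zeroCurvature (lie_smul_eq_smul_smul hδτ hflow) ?_ ?_ hΦ
  · refine (congrArg _ ?_).trans (map_zero _)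
    ring
  · have htransport := smul_apply_mul_rkdvTransport δ lam M
    rw [Derivation.leibniz, smul_eq_mul, smul_eq_mul, map_mul, map_ofNat] at htransport
    rw [map_sub, map_sub, map_neg, map_neg, τ.map_algebraMap, Derivation.map_algebraMap, hflow]
    linear_combination -htransport

end DifferentialAlgebra

section SmoothFunctions

variable {E : Type*} [NormedAddCommGroup E] [NormedSpace ℝ E]

variable (E) in
/-- The real algebra of smooth functions on `E`, on which directional derivatives act as
derivations. -/
def smoothFunctions : Subalgebra ℝ (E → ℝ) where
  carrier := {f | ContDiff ℝ (⊤ : ℕ∞) f}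
  mul_mem' hf hg := hf.out.mul hg.out
  add_mem' hf hg := hf.out.add hg.out
  algebraMap_mem' _ := Set.mem_ofPred.2 contDiff_const

namespace smoothFunctions

theorem mem_iff {f : E → ℝ} : f ∈ smoothFunctions E ↔ ContDiff ℝ (⊤ : ℕ∞) f :=
  Iff.rfl

theorem contDiff (f : smoothFunctions E) : ContDiff ℝ (⊤ : ℕ∞) (f : E → ℝ) :=
  f.2

theorem differentiable (f : smoothFunctions E) : Differentiable ℝ (f : E → ℝ) :=
  (contDiff f).differentiable (by simp)

theorem contDiff_fderiv (f : smoothFunctions E) : ContDiff ℝ (⊤ : ℕ∞) (fderiv ℝ (f : E → ℝ)) :=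
  (contDiff f).fderiv_right (by simp)

/-- The directional derivative along `v` as a derivation of the algebra of smooth functions. -/
def dirDeriv (v : E) : Derivation ℝ (smoothFunctions E) (smoothFunctions E) :=
  .mk'
    { toFun (f : smoothFunctions E) :=
        ⟨fun x ↦ fderiv ℝ f x v, mem_iff.2 <| (contDiff_fderiv f).clm_apply contDiff_const⟩
      map_add' f g := by
        ext x
        simp [fderiv_add (differentiable f x) (differentiable g x)]
      map_smul' r f := by
        ext x
        simp [fderiv_const_smul (differentiable f x)] }
    fun f g ↦ by
      ext x
      simp [fderiv_mul (differentiable f x) (differentiable g x)]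

theorem lie_dirDeriv (v w : E) : ⁅dirDeriv v, dirDeriv w⁆ = 0 := by
  ext f x
  have hf' : DifferentiableAt ℝ (fderiv ℝ (f : E → ℝ)) x :=
    (contDiff_fderiv f).differentiable (by simp) x
  have hiterate (v w : E) :
      (dirDeriv v (dirDeriv w f) : E → ℝ) x = fderiv ℝ (fderiv ℝ (f : E → ℝ)) x v w := by
    change fderiv ℝ (fun z ↦ fderiv ℝ (f : E → ℝ) z w) x v = _
    simp [fderiv_clm_apply hf' (differentiableAt_const w)]
  have hsymm : IsSymmSndFDerivAt ℝ (f : E → ℝ) x :=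
    (contDiff f).contDiffAt.isSymmSndFDerivAt (by
      rw [minSmoothness_of_isRCLikeNormedField]
      exact WithTop.coe_le_coe.2 (le_top : (2 : ℕ∞) ≤ ⊤))
  rw [Derivation.commutator_apply]
  simp [hiterate, hsymm.eq v w]

end smoothFunctions

end SmoothFunctions

section Plane

open smoothFunctions

theorem exists_curry_eq {f : ℝ → ℝ → ℝ} (hf : Smooth2 f) :
    ∃ g : smoothFunctions (ℝ × ℝ), Function.curry g = f :=
  ⟨⟨Function.uncurry f, hf⟩, rfl⟩

theorem d1_curry (f : smoothFunctions (ℝ × ℝ)) :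
    d1 (Function.curry f) = Function.curry (dirDeriv (1, 0) f) := by
  ext y T
  have hline : HasDerivAt (fun a : ℝ ↦ (a, T)) ((1 : ℝ), (0 : ℝ)) y :=
    (hasDerivAt_id y).prodMk (hasDerivAt_const y T)
  exact ((differentiable f (y, T)).hasFDerivAt.comp_hasDerivAt y hline).deriv

theorem d2_curry (f : smoothFunctions (ℝ × ℝ)) :
    d2 (Function.curry f) = Function.curry (dirDeriv (0, 1) f) := by
  ext y T
  have hline : HasDerivAt (fun b : ℝ ↦ (y, b)) ((0 : ℝ), (1 : ℝ)) T :=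
    (hasDerivAt_const T y).prodMk (hasDerivAt_id T)
  exact ((differentiable f (y, T)).hasFDerivAt.comp_hasDerivAt T hline).deriv

theorem rkdv_iff {m : smoothFunctions (ℝ × ℝ)} :
    (∀ y T, d2 (Function.curry m) y T
      + d1 (fun y T ↦ Function.curry m y T ^ 3 * (d1 (d1 (Function.curry m)) y T - 1)) y T = 0) ↔
      dirDeriv (0, 1) m + dirDeriv (1, 0) (m ^ 3 * (dirDeriv (1, 0) (dirDeriv (1, 0) m) - 1)) =
        0 := by
  have hflux : (fun y T ↦ Function.curry m y T ^ 3 * (d1 (d1 (Function.curry m)) y T - 1)) =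
      Function.curry (m ^ 3 * (dirDeriv (1, 0) (dirDeriv (1, 0) m) - 1)).1 := by
    rw [d1_curry, d1_curry]
    rfl
  rw [hflux, d1_curry, d2_curry, Subtype.ext_iff, funext_iff, Prod.forall]
  rfl

theorem eq_neg_div_mul_add_div_sq_mul_iff {K : Type*} [Field K] {m m' l f f' f'' : K}
    (hm : m ≠ 0) :
    f'' = -(m' / m) * f' + ((m - l) / m ^ 2) * f ↔ m * (m * f'' + m' * f') = (m - l) * f := by
  have hclear : m * (m * f'' + m' * f') - (m - l) * f =
      m ^ 2 * (f'' - (-(m' / m) * f' + ((m - l) / m ^ 2) * f)) := by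
    field_simp
    ring
  rw [← sub_eq_zero, ← sub_eq_zero (a := m * _), hclear,
    mul_eq_zero_iff_left (pow_ne_zero 2 hm)]

theorem spectral_iff_schrodinger {m f : smoothFunctions (ℝ × ℝ)} {lam : ℝ}
    (hm : ∀ p, (m : ℝ × ℝ → ℝ) p ≠ 0) :
    (∀ y T, d1 (d1 (Function.curry f)) y T =
      -(d1 (Function.curry m) y T / Function.curry m y T) * d1 (Function.curry f) y T
        + ((Function.curry m y T - lam) / Function.curry m y T ^ 2) * Function.curry f y T) ↔
      (m • dirDeriv (1, 0)) ((m • dirDeriv (1, 0)) f) =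
        (m - algebraMap ℝ (smoothFunctions (ℝ × ℝ)) lam) * f := by
  rw [Subtype.ext_iff, funext_iff, Prod.forall]
  refine forall₂_congr fun y T ↦ ?_
  simp only [d1_curry]
  refine (eq_neg_div_mul_add_div_sq_mul_iff (hm (y, T))).trans (Eq.congr_left ?_)
  simp only [Function.curry_apply, Derivation.smul_apply, Derivation.leibniz, smul_eq_mul,
    Subalgebra.coe_mul, Subalgebra.coe_add, Pi.mul_apply, Pi.add_apply]
  ring

theorem curry_rkdvTemporalDefect (m f : smoothFunctions (ℝ × ℝ)) (lam : ℝ) :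
    Function.curry (rkdvTemporalDefect (dirDeriv (1, 0)) (dirDeriv (0, 1)) lam m f).1 =
      fun y T ↦ d2 (Function.curry f) y T
        - (Function.curry m y T ^ 2 * d1 (d1 (Function.curry m)) y T
            + Function.curry m y T * d1 (Function.curry m) y T ^ 2
            - Function.curry m y T ^ 2 + 4 * lam * Function.curry m y T)
          * d1 (Function.curry f) y T
        + Function.curry m y T * d1 (Function.curry m) y T * Function.curry f y T := by
  simp only [d1_curry, d2_curry]
  rfl

end Plane

/-- if `M` solves RKdV and `Φ` satisfies the spatial part of the RKdV
scalar Lax pair, then `W = Φ_T − (M²M_yy + M·M_y² − M² + 4λM)Φ_y + M·M_y·Φ`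
satisfies the same spatial spectral equation. -/
theorem RKdV_Lax_compatibility (M Φ : ℝ → ℝ → ℝ) (lam : ℝ)
    (hM : Smooth2 M) (hΦ : Smooth2 Φ)
    (hne : ∀ y T, M y T ≠ 0)
    (hRKdV : ∀ y T, d2 M y T
      + d1 (fun y T => (M y T) ^ 3 * (d1 (d1 M) y T - 1)) y T = 0)
    (hspec : ∀ y T, d1 (d1 Φ) y T =
      -(d1 M y T / M y T) * d1 Φ y T + ((M y T - lam) / (M y T) ^ 2) * Φ y T) :
    ∀ y T,
      d1 (d1 (fun y T =>
          d2 Φ y T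
            - ((M y T) ^ 2 * d1 (d1 M) y T + M y T * (d1 M y T) ^ 2
                - (M y T) ^ 2 + 4 * lam * M y T) * d1 Φ y T
            + M y T * d1 M y T * Φ y T)) y T
        = -(d1 M y T / M y T) *
            d1 (fun y T =>
              d2 Φ y T
                - ((M y T) ^ 2 * d1 (d1 M) y T + M y T * (d1 M y T) ^ 2
                    - (M y T) ^ 2 + 4 * lam * M y T) * d1 Φ y T
                + M y T * d1 M y T * Φ y T) y T
          + ((M y T - lam) / (M y T) ^ 2) *
            (d2 Φ y T
              - ((M y T) ^ 2 * d1 (d1 M) y T + M y T * (d1 M y T) ^ 2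
                  - (M y T) ^ 2 + 4 * lam * M y T) * d1 Φ y T
              + M y T * d1 M y T * Φ y T) := by
  obtain ⟨m, rfl⟩ := exists_curry_eq hM
  obtain ⟨φ, rfl⟩ := exists_curry_eq hΦ
  have hm : ∀ p, (m : ℝ × ℝ → ℝ) p ≠ 0 := fun p ↦ hne p.1 p.2
  have hcomm := smoothFunctions.lie_dirDeriv ((0, 1) : ℝ × ℝ) (1, 0)
  have hflow := rkdv_iff.1 hRKdV
  have hφ := (spectral_iff_schrodinger hm).1 hspec
  have hW := schrodinger_rkdvTemporalDefect hcomm hflow hφ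
  have hspecW := (spectral_iff_schrodinger hm).2 hW
  rw [curry_rkdvTemporalDefect] at hspecW
  exact hspecW
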